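/- arXiv:2511.03358 — 2 statements merged into one kernel-verified Lean document; each statement's English description precedes it below -/
import Mathlib

section
/- Fix a = 1, θ > 0, σa > 0 and ν ∈ [0,1]. Then lim_{σm → 0⁺} F'_μ(ν, σa, σm, 1, θ)[0] = G'_μ(σa, θ)[0], i.e. as the multiplicative noise intensity tends to zero, the derivative at zero of the self-consistency function converges to that of the Dawson–Shiino model. -/
/-!
Both stationary densities are exponential tilts `w(x) exp(μ h(x))` of their value at `μ = 0`, so the
self-consistency function is the mean of `x` under the tilted density minus `μ`, and its derivative
is the covariance of `x` and `h` minus one. As `σm → 0`, the direction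
`h(x) = 2θ arctan(σm x / σa) / (σa σm)` tends to `2θx / σa²`, and expanding the logarithm to second
order shows that the weight `rho0` tends to the quartic Gibbs weight. The weights are bounded by a
fixed Gaussian and `|h(x)| ≤ |2θ / σa²| |x|`, uniformly for small `σm`, so by dominated convergence
the covariances converge.
-/

open MeasureTheory Real Set Filter

/-- Unnormalised stationary density ρ0[μ](x) of the McKean–Vlasov SDE
`dX = (aX − X³ − θ(X − m₁))dt + σa dB¹ + σm X ∘_ν dB²`. -/
noncomputable def rho0 (ν σa σm a θ μ x : ℝ) : ℝ :=
  Real.exp (((a - θ - ν * σm ^ 2 + σa ^ 2 / σm ^ 2) / σm ^ 2) *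
      Real.log (1 + (σm ^ 2 / σa ^ 2) * x ^ 2) +
    (2 * θ * μ / (σa * σm)) * Real.arctan (σm * x / σa) - x ^ 2 / σm ^ 2)

/-- Normalisation constant Z[μ] = ∫ ρ0[μ]. -/
noncomputable def Z (ν σa σm a θ μ : ℝ) : ℝ := ∫ x : ℝ, rho0 ν σa σm a θ μ x

/-- Self-consistency function F(ν,σa,σm,a,θ)[μ] = (∫ (x−μ)·ρ0[μ]) / Z[μ]. -/
noncomputable def F (ν σa σm a θ μ : ℝ) : ℝ :=
  (∫ x : ℝ, (x - μ) * rho0 ν σa σm a θ μ x) / Z ν σa σm a θ μ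

/-- F'_μ[0] : the derivative at μ = 0 of μ ↦ F(ν,σa,σm,a,θ)[μ]. -/
noncomputable def Fmu' (ν σa σm a θ : ℝ) : ℝ := deriv (fun μ => F ν σa σm a θ μ) 0

/-- Unnormalised Dawson–Shiino stationary density ρDS[μ]. -/
noncomputable def rhoDS (σa θ μ x : ℝ) : ℝ :=
  Real.exp (-(2 / σa ^ 2) * (x ^ 4 / 4 - x ^ 2 / 2 + θ * (x ^ 2 / 2 - μ * x)))

/-- The Dawson–Shiino self-consistency function G(σa,θ)[μ]. -/
noncomputable def G (σa θ μ : ℝ) : ℝ :=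
  (∫ x : ℝ, (x - μ) * rhoDS σa θ μ x) / ∫ x : ℝ, rhoDS σa θ μ x

/-- G'_μ[0] of the Dawson–Shiino model. -/
noncomputable def Gmu' (σa θ : ℝ) : ℝ := deriv (fun μ => G σa θ μ) 0

open scoped Topology

section WeightedMean

variable {α : Type*} {w h : α → ℝ}

/-- Exponential tilt of the weight `w` in the direction `h` with parameter `μ`. Both stationary
densities of the theorem depend on the mean `μ` in this way. -/
noncomputable def expTilt (w h : α → ℝ) (μ : ℝ) (x : α) : ℝ := w x * exp (μ * h x)

theorem mul_expTilt (X w h : α → ℝ) (μ : ℝ) : X * expTilt w h μ = expTilt (X * w) h μ := by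
  ext x
  simp only [Pi.mul_apply, expTilt, mul_assoc]

theorem abs_expTilt_le {μ c : ℝ} (hμ : |μ| ≤ c) (x : α) :
    |expTilt w h μ x| ≤ |expTilt w |h| c x| := by
  have hexp : μ * h x ≤ c * |h x| :=
    calc μ * h x ≤ |μ| * |h x| := (le_abs_self _).trans_eq (abs_mul _ _)
      _ ≤ c * |h x| := by gcongr
  simp only [expTilt, abs_mul, abs_exp, Pi.abs_apply]
  exact mul_le_mul_of_nonneg_left (exp_le_exp.2 hexp) (abs_nonneg _)

variable [MeasurableSpace α] {P : Measure α} {ρ X : α → ℝ}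

/-- Mean of the observable `X` under the probability measure whose unnormalised density with
respect to `P` is `ρ`; it has the junk value `0` if the normalisation `∫ ρ` vanishes. -/
noncomputable def weightedMean (P : Measure α) (ρ X : α → ℝ) : ℝ :=
  (∫ x, X x * ρ x ∂P) / ∫ x, ρ x ∂P

/-- Covariance of `X` and `Y` under the probability measure with unnormalised density `ρ`. -/
noncomputable def weightedCov (P : Measure α) (ρ X Y : α → ℝ) : ℝ :=
  weightedMean P ρ (X * Y) - weightedMean P ρ X * weightedMean P ρ Y

theorem weightedMean_sub_const (hρ : Integrable ρ P) (hXρ : Integrable (X * ρ) P)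
    (hZ : ∫ x, ρ x ∂P ≠ 0) (c : ℝ) :
    weightedMean P ρ (fun x => X x - c) = weightedMean P ρ X - c := by
  have hsub : ∫ x, (X x - c) * ρ x ∂P = (∫ x, X x * ρ x ∂P) - c * ∫ x, ρ x ∂P := by
    rw [← integral_const_mul]
    simp only [sub_mul]
    exact integral_sub hXρ (hρ.const_mul c)
  rw [weightedMean, weightedMean, hsub, sub_div, mul_div_cancel_right₀ _ hZ]

theorem aestronglyMeasurable_of_integrable_expTilt (hw : ∀ t, Integrable (expTilt w |h| t) P) :
    AEStronglyMeasurable w P := by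
  have hzero : expTilt w |h| 0 = w := by
    ext x
    simp [expTilt]
  exact hzero ▸ (hw 0).aestronglyMeasurable

theorem aestronglyMeasurable_expTilt (hw : AEStronglyMeasurable w P)
    (hh : AEStronglyMeasurable h P) (μ : ℝ) : AEStronglyMeasurable (expTilt w h μ) P :=
  hw.mul (continuous_exp.comp_aestronglyMeasurable (hh.const_mul μ))

theorem integrable_expTilt (hh : AEStronglyMeasurable h P)
    (hw : ∀ t, Integrable (expTilt w |h| t) P) (μ : ℝ) : Integrable (expTilt w h μ) P :=
  (hw |μ|).mono
    (aestronglyMeasurable_expTilt (aestronglyMeasurable_of_integrable_expTilt hw) hh μ)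
    (.of_forall fun x => abs_expTilt_le le_rfl x)

theorem hasDerivAt_integral_expTilt (hh : AEStronglyMeasurable h P)
    (hw : ∀ t, Integrable (expTilt w |h| t) P) (μ : ℝ) :
    HasDerivAt (fun μ => ∫ x, expTilt w h μ x ∂P) (∫ x, h x * expTilt w h μ x ∂P) μ := by
  have hmeas (t : ℝ) : AEStronglyMeasurable (expTilt w h t) P :=
    (integrable_expTilt hh hw t).aestronglyMeasurable
  have hbound (x : α) (t : ℝ) (ht : t ∈ Metric.ball μ 1) :
      ‖h x * expTilt w h t x‖ ≤ ‖expTilt w |h| (|μ| + 2) x‖ := by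
    have ht' : |t| ≤ |μ| + 1 := by
      have hdist : |t - μ| < 1 := by simpa [Real.dist_eq] using ht
      linarith [abs_sub_abs_le_abs_sub t μ]
    calc |h x * expTilt w h t x| = |h x| * |expTilt w h t x| := abs_mul _ _
      _ ≤ exp |h x| * |expTilt w |h| (|μ| + 1) x| :=
        mul_le_mul (by linarith [add_one_le_exp |h x|]) (abs_expTilt_le ht' x)
          (abs_nonneg _) (exp_pos _).le
      _ = |expTilt w |h| (|μ| + 2) x| := by
        simp only [expTilt, abs_mul, abs_exp, Pi.abs_apply]
        rw [mul_left_comm, ← exp_add]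
        ring_nf
  have hderiv (x : α) (t : ℝ) :
      HasDerivAt (fun s => expTilt w h s x) (h x * expTilt w h t x) t := by
    have hlin : HasDerivAt (fun s : ℝ => s * h x) (h x) t := hasDerivAt_mul_const (h x)
    exact (hlin.exp.const_mul (w x)).congr_deriv (by rw [expTilt]; ring)
  exact (hasDerivAt_integral_of_dominated_loc_of_deriv_le
    (Metric.ball_mem_nhds μ one_pos) (.of_forall hmeas) (integrable_expTilt hh hw μ)
    (hh.mul (hmeas μ)) (.of_forall hbound) (hw _).norm
    (.of_forall fun x t _ => hderiv x t)).2

theorem hasDerivAt_weightedMean_expTilt (hh : AEStronglyMeasurable h P)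
    (hw : ∀ t, Integrable (expTilt w |h| t) P) (hX : ∀ t, Integrable (X * expTilt w |h| t) P)
    {μ : ℝ} (hZ : ∫ x, expTilt w h μ x ∂P ≠ 0) :
    HasDerivAt (fun μ => weightedMean P (expTilt w h μ) X)
      (weightedCov P (expTilt w h μ) X h) μ := by
  have hnum : HasDerivAt (fun μ => ∫ x, X x * expTilt w h μ x ∂P)
      (∫ x, X x * h x * expTilt w h μ x ∂P) μ := by
    have hXw (t : ℝ) : Integrable (expTilt (X * w) |h| t) P := mul_expTilt X w |h| t ▸ hX t
    have hderiv := hasDerivAt_integral_expTilt hh hXw μ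
    simp only [← mul_expTilt, Pi.mul_apply] at hderiv
    exact hderiv.congr_deriv (by congr 1; ext x; ring)
  refine (hnum.fun_div (hasDerivAt_integral_expTilt hh hw μ) hZ).congr_deriv ?_
  simp only [weightedCov, weightedMean, Pi.mul_apply]
  field_simp

end WeightedMean

section GaussianTilt

variable {b K L C C' c c' : ℝ} {w h f g : ℝ → ℝ}

/-- The self-consistency function `μ ↦ E[x - μ]` of a family of unnormalised densities `ρ μ` on
the line; `F` and `G` are its values at `rho0` and `rhoDS`. -/
noncomputable def selfConsistency (ρ : ℝ → ℝ → ℝ) (μ : ℝ) : ℝ :=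
  weightedMean volume (ρ μ) fun x => x - μ

/-- Continuous functions of exponential growth, with explicit constants: the observables that can
be integrated against all the tilts of a Gaussian-dominated weight. -/
structure HasExpGrowth (C c : ℝ) (g : ℝ → ℝ) : Prop where
  continuous : Continuous g
  abs_le : ∀ x, |g x| ≤ C * exp (c * |x|)

/-- A positive continuous weight `w` with Gaussian decay, to be tilted by a continuous function `h`
of at most linear growth. The constants are explicit so that they can be uniform in a family. -/
structure IsGaussianTilt (b K L : ℝ) (w h : ℝ → ℝ) : Prop where
  continuous_weight : Continuous w
  continuous_tilt : Continuous h
  weight_pos : ∀ x, 0 < w x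
  weight_le : ∀ x, w x ≤ K * exp (-b * x ^ 2)
  abs_tilt_le : ∀ x, |h x| ≤ L * |x|

theorem hasExpGrowth_one : HasExpGrowth 1 0 1 := ⟨continuous_one, by simp⟩

theorem hasExpGrowth_id : HasExpGrowth 1 1 id :=
  ⟨continuous_id, fun x => by simpa using (lt_add_one |x|).le.trans (add_one_le_exp |x|)⟩

theorem HasExpGrowth.mul (hf : HasExpGrowth C c f) (hg : HasExpGrowth C' c' g) :
    HasExpGrowth (C * C') (c + c') (f * g) where
  continuous := hf.continuous.mul hg.continuous
  abs_le x := by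
    calc |f x * g x| = |f x| * |g x| := abs_mul _ _
      _ ≤ C * exp (c * |x|) * (C' * exp (c' * |x|)) :=
        mul_le_mul (hf.abs_le x) (hg.abs_le x) (abs_nonneg _) ((abs_nonneg _).trans (hf.abs_le x))
      _ = C * C' * exp ((c + c') * |x|) := by rw [add_mul, exp_add]; ring

theorem integrable_exp_mul_abs_sub_mul_sq (hb : 0 < b) (c : ℝ) :
    Integrable fun x : ℝ => exp (c * |x| - b * x ^ 2) := by
  refine ((integrable_exp_neg_mul_sq (half_pos hb)).const_mul (exp (c ^ 2 / (2 * b)))).mono'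
    (by fun_prop) (.of_forall fun x => ?_)
  have hsq : c ^ 2 / (2 * b) + -(b / 2) * x ^ 2 - (c * |x| - b * x ^ 2)
      = (c - b * |x|) ^ 2 / (2 * b) := by
    rw [← sq_abs x]
    field_simp
    ring
  have hnonneg : 0 ≤ (c - b * |x|) ^ 2 / (2 * b) := by positivity
  rw [norm_of_nonneg (exp_pos _).le, ← exp_add, exp_le_exp]
  linarith

namespace IsGaussianTilt

theorem linear_nonneg (hwh : IsGaussianTilt b K L w h) : 0 ≤ L := by
  simpa using (abs_nonneg _).trans (hwh.abs_tilt_le 1)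

theorem hasExpGrowth (hwh : IsGaussianTilt b K L w h) : HasExpGrowth L 1 h where
  continuous := hwh.continuous_tilt
  abs_le x := (hwh.abs_tilt_le x).trans <|
    mul_le_mul_of_nonneg_left (by simpa using hasExpGrowth_id.abs_le x) hwh.linear_nonneg

protected theorem abs (hwh : IsGaussianTilt b K L w h) : IsGaussianTilt b K L w |h| where
  continuous_weight := hwh.continuous_weight
  continuous_tilt := hwh.continuous_tilt.abs
  weight_pos := hwh.weight_pos
  weight_le := hwh.weight_le
  abs_tilt_le x := by simpa using hwh.abs_tilt_le x

theorem continuous_expTilt (hwh : IsGaussianTilt b K L w h) (μ : ℝ) :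
    Continuous (expTilt w h μ) :=
  hwh.continuous_weight.mul (continuous_exp.comp (continuous_const.mul hwh.continuous_tilt))

theorem abs_mul_expTilt_le (hwh : IsGaussianTilt b K L w h) (hg : HasExpGrowth C c g) (μ x : ℝ) :
    |g x * expTilt w h μ x| ≤ C * K * exp ((c + |μ| * L) * |x| - b * x ^ 2) := by
  have htilt : μ * h x ≤ |μ| * (L * |x|) :=
    calc μ * h x ≤ |μ| * |h x| := (le_abs_self _).trans_eq (abs_mul _ _)
      _ ≤ |μ| * (L * |x|) := by gcongr; exact hwh.abs_tilt_le x
  have hweight := (hwh.weight_pos x).le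
  calc |g x * expTilt w h μ x| = |g x| * (w x * exp (μ * h x)) := by
        rw [expTilt, abs_mul, abs_mul, abs_exp, abs_of_nonneg hweight]
    _ ≤ C * exp (c * |x|) * (K * exp (-b * x ^ 2) * exp (|μ| * (L * |x|))) :=
        mul_le_mul (hg.abs_le x)
          (mul_le_mul (hwh.weight_le x) (exp_le_exp.2 htilt) (exp_pos _).le
            (hweight.trans (hwh.weight_le x)))
          (by positivity) ((abs_nonneg _).trans (hg.abs_le x))
    _ = C * K * (exp (c * |x|) * exp (-b * x ^ 2) * exp (|μ| * (L * |x|))) := by ring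
    _ = C * K * exp ((c + |μ| * L) * |x| - b * x ^ 2) := by
        rw [← exp_add, ← exp_add]
        ring_nf

theorem integrable_mul_expTilt (hwh : IsGaussianTilt b K L w h) (hb : 0 < b)
    (hg : HasExpGrowth C c g) (μ : ℝ) : Integrable (g * expTilt w h μ) :=
  ((integrable_exp_mul_abs_sub_mul_sq hb _).const_mul (C * K)).mono'
    (hg.continuous.mul (hwh.continuous_expTilt μ)).aestronglyMeasurable
    (.of_forall (hwh.abs_mul_expTilt_le hg μ))

theorem integrable_expTilt (hwh : IsGaussianTilt b K L w h) (hb : 0 < b) (μ : ℝ) :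
    Integrable (expTilt w h μ) := by
  simpa using hwh.integrable_mul_expTilt hb hasExpGrowth_one μ

theorem integral_expTilt_pos (hwh : IsGaussianTilt b K L w h) (hb : 0 < b) (μ : ℝ) :
    0 < ∫ x, expTilt w h μ x := by
  have hpos (x : ℝ) : 0 < expTilt w h μ x := mul_pos (hwh.weight_pos x) (exp_pos _)
  have hsupp : Function.support (expTilt w h μ) = univ :=
    eq_univ_of_forall fun x => (hpos x).ne'
  rw [integral_pos_iff_support_of_nonneg (fun x => (hpos x).le) (hwh.integrable_expTilt hb μ),
    hsupp]
  simp

theorem deriv_selfConsistency (hwh : IsGaussianTilt b K L w h) (hb : 0 < b) (μ : ℝ) :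
    deriv (selfConsistency (expTilt w h)) μ = weightedCov volume (expTilt w h μ) id h - 1 := by
  have hZ (t : ℝ) : ∫ x, expTilt w h t x ≠ 0 := (hwh.integral_expTilt_pos hb t).ne'
  have hsc : selfConsistency (expTilt w h) =
      fun t => weightedMean volume (expTilt w h t) id - t :=
    funext fun t => weightedMean_sub_const (hwh.integrable_expTilt hb t)
      (hwh.integrable_mul_expTilt hb hasExpGrowth_id t) (hZ t) t
  have hmean := hasDerivAt_weightedMean_expTilt hwh.continuous_tilt.aestronglyMeasurable
    (hwh.abs.integrable_expTilt hb) (hwh.abs.integrable_mul_expTilt hb hasExpGrowth_id) (hZ μ)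
  rw [hsc]
  exact (hmean.sub (hasDerivAt_id μ)).deriv

end IsGaussianTilt

variable {ι : Type*} {l : Filter ι} {W H : ι → ℝ → ℝ} {w₀ h₀ : ℝ → ℝ}

/-- Pointwise convergence of weights `W i → w₀` and tilting directions `H i → h₀` under uniform
Gaussian control. -/
structure TendstoGaussianTilt (l : Filter ι) (b K L : ℝ) (W H : ι → ℝ → ℝ) (w₀ h₀ : ℝ → ℝ) :
    Prop where
  isGaussianTilt : ∀ᶠ i in l, IsGaussianTilt b K L (W i) (H i)
  tendsto_weight : ∀ x, Tendsto (fun i => W i x) l (𝓝 (w₀ x))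
  tendsto_tilt : ∀ x, Tendsto (fun i => H i x) l (𝓝 (h₀ x))

namespace TendstoGaussianTilt

theorem isGaussianTilt_limit [l.NeBot] (T : TendstoGaussianTilt l b K L W H w₀ h₀)
    (hw₀ : Continuous w₀) (hpos : ∀ x, 0 < w₀ x) (hh₀ : Continuous h₀) :
    IsGaussianTilt b K L w₀ h₀ where
  continuous_weight := hw₀
  continuous_tilt := hh₀
  weight_pos := hpos
  weight_le x :=
    le_of_tendsto (T.tendsto_weight x) (T.isGaussianTilt.mono fun _ hi => hi.weight_le x)
  abs_tilt_le x :=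
    le_of_tendsto (T.tendsto_tilt x).abs (T.isGaussianTilt.mono fun _ hi => hi.abs_tilt_le x)

variable [l.IsCountablyGenerated]

theorem tendsto_integral_mul (T : TendstoGaussianTilt l b K L W H w₀ h₀) (hb : 0 < b)
    {X : ι → ℝ → ℝ} {X₀ : ℝ → ℝ} (hX : ∀ᶠ i in l, HasExpGrowth C c (X i))
    (hlim : ∀ x, Tendsto (fun i => X i x) l (𝓝 (X₀ x))) (μ : ℝ) :
    Tendsto (fun i => ∫ x, X i x * expTilt (W i) (H i) μ x) l
      (𝓝 (∫ x, X₀ x * expTilt w₀ h₀ μ x)) := by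
  refine tendsto_integral_filter_of_dominated_convergence
    (fun x => C * K * exp ((c + |μ| * L) * |x| - b * x ^ 2)) ?_ ?_
    ((integrable_exp_mul_abs_sub_mul_sq hb _).const_mul _) (.of_forall fun x => ?_)
  · filter_upwards [T.isGaussianTilt, hX] with i hi hXi
    exact (hXi.continuous.mul (hi.continuous_expTilt μ)).aestronglyMeasurable
  · filter_upwards [T.isGaussianTilt, hX] with i hi hXi
    exact .of_forall (hi.abs_mul_expTilt_le hXi μ)
  · exact (hlim x).mul ((T.tendsto_weight x).mul
      ((continuous_exp.tendsto _).comp ((T.tendsto_tilt x).const_mul μ)))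

theorem tendsto_weightedMean (T : TendstoGaussianTilt l b K L W H w₀ h₀)
    (T₀ : IsGaussianTilt b K L w₀ h₀) (hb : 0 < b) {X : ι → ℝ → ℝ} {X₀ : ℝ → ℝ}
    (hX : ∀ᶠ i in l, HasExpGrowth C c (X i))
    (hlim : ∀ x, Tendsto (fun i => X i x) l (𝓝 (X₀ x))) (μ : ℝ) :
    Tendsto (fun i => weightedMean volume (expTilt (W i) (H i) μ) (X i)) l
      (𝓝 (weightedMean volume (expTilt w₀ h₀ μ) X₀)) := by
  have hZ := T.tendsto_integral_mul hb (.of_forall fun _ => hasExpGrowth_one)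
    (fun _ => tendsto_const_nhds) μ
  simp only [Pi.one_apply, one_mul] at hZ
  exact (T.tendsto_integral_mul hb hX hlim μ).div hZ (T₀.integral_expTilt_pos hb μ).ne'

theorem tendsto_weightedCov_id (T : TendstoGaussianTilt l b K L W H w₀ h₀)
    (T₀ : IsGaussianTilt b K L w₀ h₀) (hb : 0 < b) (μ : ℝ) :
    Tendsto (fun i => weightedCov volume (expTilt (W i) (H i) μ) id (H i)) l
      (𝓝 (weightedCov volume (expTilt w₀ h₀ μ) id h₀)) := by
  have hid : ∀ᶠ _ in l, HasExpGrowth 1 1 id := .of_forall fun _ => hasExpGrowth_id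
  have htilt := T.isGaussianTilt.mono fun _ hi => hi.hasExpGrowth
  have hprod := htilt.mono fun _ hi => hasExpGrowth_id.mul hi
  exact (T.tendsto_weightedMean T₀ hb hprod (fun x => (T.tendsto_tilt x).const_mul x) μ).sub
    ((T.tendsto_weightedMean T₀ hb hid (fun _ => tendsto_const_nhds) μ).mul
      (T.tendsto_weightedMean T₀ hb htilt T.tendsto_tilt μ))

theorem tendsto_deriv_selfConsistency (T : TendstoGaussianTilt l b K L W H w₀ h₀)
    (T₀ : IsGaussianTilt b K L w₀ h₀) (hb : 0 < b) (μ : ℝ) :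
    Tendsto (fun i => deriv (selfConsistency (expTilt (W i) (H i))) μ) l
      (𝓝 (deriv (selfConsistency (expTilt w₀ h₀)) μ)) := by
  rw [T₀.deriv_selfConsistency hb]
  refine ((T.tendsto_weightedCov_id T₀ hb μ).sub_const 1).congr' ?_
  filter_upwards [T.isGaussianTilt] with i hi
  exact (hi.deriv_selfConsistency hb μ).symm

end TendstoGaussianTilt

end GaussianTilt

section Elementary

theorem log_one_add_sub_self_le {u : ℝ} (hu : 0 ≤ u) :
    log (1 + u) - u ≤ -(u ^ 2 / (2 * (1 + u))) := by
  have hsinh : log (1 + u) ≤ sinh (log (1 + u)) :=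
    self_le_sinh_iff.2 (log_nonneg (by linarith))
  rw [sinh_log (by linarith)] at hsinh
  have heq : (1 + u - (1 + u)⁻¹) / 2 = u - u ^ 2 / (2 * (1 + u)) := by
    field_simp
    ring
  linarith

theorem neg_sq_div_le_log_one_add_sub_self {u : ℝ} (hu : 0 ≤ u) :
    -(u ^ 2 / (u + 2)) ≤ log (1 + u) - u := by
  have heq : 2 * u / (u + 2) = u - u ^ 2 / (u + 2) := by
    field_simp
    ring
  linarith [le_log_one_add_of_nonneg hu]

theorem abs_arctan_le_abs (y : ℝ) : |arctan y| ≤ |y| := by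
  have hlip : LipschitzWith 1 arctan :=
    lipschitzWith_of_nnnorm_deriv_le differentiable_arctan fun x => by
      simp only [Real.deriv_arctan]
      rw [← NNReal.coe_le_coe, coe_nnnorm, norm_of_nonneg (by positivity)]
      exact div_le_one_of_le₀ (by nlinarith [sq_nonneg x]) (by positivity)
  simpa [Real.dist_eq] using hlip.dist_le_mul y 0

theorem tendsto_log_one_add_mul_div (t : ℝ) :
    Tendsto (fun s => log (1 + s * t) / s) (𝓝[≠] 0) (𝓝 t) := by
  have hderiv : HasDerivAt (fun s : ℝ => log (1 + s * t)) t 0 := by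
    simpa using ((hasDerivAt_mul_const t (x := 0)).const_add 1).log (by simp)
  simpa [div_eq_inv_mul] using hderiv.tendsto_slope_zero

theorem tendsto_arctan_mul_div (y : ℝ) :
    Tendsto (fun m => arctan (m * y) / m) (𝓝[≠] 0) (𝓝 y) := by
  have hderiv : HasDerivAt (fun m : ℝ => arctan (m * y)) y 0 := by
    simpa using (hasDerivAt_mul_const y (x := 0)).arctan
  simpa [div_eq_inv_mul] using hderiv.tendsto_slope_zero

theorem tendsto_log_one_add_mul_sub_div_sq {t : ℝ} (ht : 0 ≤ t) :
    Tendsto (fun s => (log (1 + s * t) - s * t) / s ^ 2) (𝓝[>] 0) (𝓝 (-(t ^ 2 / 2))) := by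
  have hlower : Tendsto (fun s : ℝ => -(t ^ 2 / (s * t + 2))) (𝓝[>] 0) (𝓝 (-(t ^ 2 / 2))) := by
    have hcont : ContinuousAt (fun s : ℝ => -(t ^ 2 / (s * t + 2))) 0 := by
      fun_prop (disch := simp)
    simpa using hcont.tendsto.mono_left nhdsWithin_le_nhds
  have hupper : Tendsto (fun s : ℝ => -(t ^ 2 / (2 * (1 + s * t)))) (𝓝[>] 0)
      (𝓝 (-(t ^ 2 / 2))) := by
    have hcont : ContinuousAt (fun s : ℝ => -(t ^ 2 / (2 * (1 + s * t)))) 0 := by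
      fun_prop (disch := simp)
    simpa using hcont.tendsto.mono_left nhdsWithin_le_nhds
  refine tendsto_of_tendsto_of_tendsto_of_le_of_le' hlower hupper ?_ ?_ <;>
    filter_upwards [self_mem_nhdsWithin] with s (hs : 0 < s)
  · rw [le_div_iff₀ (by positivity)]
    refine Eq.trans_le ?_ (neg_sq_div_le_log_one_add_sub_self (mul_nonneg hs.le ht))
    ring
  · rw [div_le_iff₀ (by positivity)]
    refine (log_one_add_sub_self_le (mul_nonneg hs.le ht)).trans_eq ?_
    ring

theorem log_one_add_mul_sub_div_sq_le {s t M : ℝ} (hs : 0 < s) (ht : 0 ≤ t)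
    (hsM : s * M ≤ 1 / 2) :
    (log (1 + s * t) - s * t) / s ^ 2 ≤ -((M * t - M ^ 2 / 2) / 2) := by
  have htangent : M * t - M ^ 2 / 2 ≤ t ^ 2 / (1 + s * t) := by
    rw [le_div_iff₀ (by positivity)]
    have hquad : s * M * t ^ 2 ≤ 1 / 2 * t ^ 2 := by gcongr
    have hlin : 0 ≤ M ^ 2 / 2 * s * t := by positivity
    nlinarith [sq_nonneg (t - M)]
  calc (log (1 + s * t) - s * t) / s ^ 2
      ≤ -((s * t) ^ 2 / (2 * (1 + s * t))) / s ^ 2 := by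
        gcongr
        exact log_one_add_sub_self_le (by positivity)
    _ = -(t ^ 2 / (1 + s * t) / 2) := by field_simp
    _ ≤ -((M * t - M ^ 2 / 2) / 2) := by gcongr

theorem tendsto_sq_nhdsNE_zero : Tendsto (fun m : ℝ => m ^ 2) (𝓝[≠] 0) (𝓝[>] 0) := by
  refine tendsto_nhdsWithin_iff.2 ⟨?_, ?_⟩
  · simpa using ((continuous_pow 2).tendsto (0 : ℝ)).mono_left nhdsWithin_le_nhds
  · filter_upwards [self_mem_nhdsWithin] with m hm
    exact sq_pos_of_ne_zero hm

end Elementary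

section StationaryDensity

variable {σa σm : ℝ}

/-- Exponent of the untilted stationary density, rearranged so that no term diverges as the
squared multiplicative noise intensity `s = σm²` tends to `0`; here `t = x²/σa²` and `κ` stands
for `a - θ - ν σm²`. -/
noncomputable def weightExponent (σa κ s t : ℝ) : ℝ :=
  κ * (log (1 + s * t) / s) + σa ^ 2 * ((log (1 + s * t) - s * t) / s ^ 2)

/-- The direction in which the mean `μ` tilts the stationary density `rho0`. -/
noncomputable def arctanTilt (σa σm θ x : ℝ) : ℝ := 2 * θ / (σa * σm) * arctan (σm * x / σa)

/-- The Dawson–Shiino density for a general linear drift coefficient `a`; `rhoDS` is the case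
`a = 1`. -/
noncomputable def rhoQuartic (σa a θ μ x : ℝ) : ℝ :=
  exp (-(2 / σa ^ 2) * (x ^ 4 / 4 - a * x ^ 2 / 2 + θ * (x ^ 2 / 2 - μ * x)))

theorem rhoQuartic_one (σa θ : ℝ) : rhoQuartic σa 1 θ = rhoDS σa θ := by
  ext μ x
  simp only [rhoQuartic, rhoDS, one_mul]

theorem rho0_eq_expTilt (ν σa σm a θ : ℝ) :
    rho0 ν σa σm a θ = expTilt (rho0 ν σa σm a θ 0) (arctanTilt σa σm θ) := by
  ext μ x
  rw [expTilt, rho0, rho0, arctanTilt, ← exp_add]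
  ring_nf

theorem rhoQuartic_eq_expTilt (σa a θ : ℝ) :
    rhoQuartic σa a θ = expTilt (rhoQuartic σa a θ 0) fun x => 2 * θ / σa ^ 2 * x := by
  ext μ x
  rw [expTilt, rhoQuartic, rhoQuartic, ← exp_add]
  ring_nf

theorem rho0_zero_eq_exp_weightExponent (hσa : σa ≠ 0) (hσm : σm ≠ 0) (ν a θ x : ℝ) :
    rho0 ν σa σm a θ 0 x =
      exp (weightExponent σa (a - θ - ν * σm ^ 2) (σm ^ 2) (x ^ 2 / σa ^ 2)) := by
  have hcomm : σm ^ 2 / σa ^ 2 * x ^ 2 = σm ^ 2 * (x ^ 2 / σa ^ 2) := by ring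
  rw [rho0, weightExponent, hcomm]
  congr 1
  generalize log (1 + σm ^ 2 * (x ^ 2 / σa ^ 2)) = l
  field_simp
  ring

theorem continuous_rho0 (ν σa σm a θ μ : ℝ) : Continuous (rho0 ν σa σm a θ μ) := by
  have hlog : Continuous fun x : ℝ => log (1 + σm ^ 2 / σa ^ 2 * x ^ 2) :=
    Continuous.log (by fun_prop) fun x => by positivity
  unfold rho0
  fun_prop

theorem continuous_rhoQuartic (σa a θ μ : ℝ) : Continuous (rhoQuartic σa a θ μ) := by
  unfold rhoQuartic
  fun_prop

theorem continuous_arctanTilt (σa σm θ : ℝ) : Continuous (arctanTilt σa σm θ) := by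
  unfold arctanTilt
  fun_prop

theorem abs_arctanTilt_le (hσm : σm ≠ 0) (σa θ x : ℝ) :
    |arctanTilt σa σm θ x| ≤ |2 * θ / σa ^ 2| * |x| := by
  calc |arctanTilt σa σm θ x| ≤ |2 * θ / (σa * σm)| * |σm * x / σa| := by
        rw [arctanTilt, abs_mul]
        exact mul_le_mul_of_nonneg_left (abs_arctan_le_abs _) (abs_nonneg _)
    _ = |2 * θ / σa ^ 2| * |x| := by
        rw [← abs_mul, ← abs_mul]
        congr 1
        field_simp

theorem tendsto_arctanTilt (σa θ x : ℝ) :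
    Tendsto (fun σm => arctanTilt σa σm θ x) (𝓝[≠] 0) (𝓝 (2 * θ / σa ^ 2 * x)) := by
  convert (tendsto_arctan_mul_div (x / σa)).const_mul (2 * θ / σa) using 2
  · rw [arctanTilt, mul_div_assoc _ x]
    ring
  · ring

-- The second-order term of the exponent beats every line `-M * t / 2`, uniformly in
-- `s ≤ 1 / (2 * M)`; the slope `M = 2 * (C + 1) / σa ^ 2` is chosen to absorb the
-- logarithmic term, which is at most `C * t`, and still leave `-t`.
theorem weightExponent_le {C κ s t : ℝ} (hσa : σa ≠ 0) (hC : 0 ≤ C) (hκ : κ ≤ C) (hs : 0 < s)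
    (hsC : s * (2 * (C + 1) / σa ^ 2) ≤ 1 / 2) (ht : 0 ≤ t) :
    weightExponent σa κ s t ≤ (C + 1) ^ 2 / σa ^ 2 - t := by
  have hlog : κ * (log (1 + s * t) / s) ≤ C * t := by
    have hnonneg : 0 ≤ log (1 + s * t) / s :=
      div_nonneg (log_nonneg (by linarith [mul_nonneg hs.le ht])) hs.le
    have hle : log (1 + s * t) / s ≤ t := by
      rw [div_le_iff₀ hs]
      linarith [log_le_sub_one_of_pos (show 0 < 1 + s * t by positivity)]
    gcongr
  have hquad := mul_le_mul_of_nonneg_left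
    (log_one_add_mul_sub_div_sq_le hs ht hsC) (sq_nonneg σa)
  calc weightExponent σa κ s t
      ≤ C * t + σa ^ 2 * -((2 * (C + 1) / σa ^ 2 * t - (2 * (C + 1) / σa ^ 2) ^ 2 / 2) / 2) :=
        add_le_add hlog hquad
    _ = (C + 1) ^ 2 / σa ^ 2 - t := by
        field_simp
        ring

theorem exists_eventually_rho0_zero_le (hσa : σa ≠ 0) (ν a θ : ℝ) :
    ∃ K, ∀ᶠ σm in 𝓝[≠] 0, ∀ x, rho0 ν σa σm a θ 0 x ≤ K * exp (-(1 / σa ^ 2) * x ^ 2) := by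
  set C : ℝ := |a - θ| + 1
  have hκ : ∀ᶠ σm in 𝓝[≠] (0 : ℝ), a - θ - ν * σm ^ 2 < C := by
    have hcont : Continuous fun σm : ℝ => a - θ - ν * σm ^ 2 := by fun_prop
    refine (hcont.tendsto 0).mono_left nhdsWithin_le_nhds |>.eventually_lt_const ?_
    simpa using (le_abs_self (a - θ)).trans_lt (lt_add_one _)
  have hsmall : ∀ᶠ σm in 𝓝[≠] (0 : ℝ), σm ^ 2 * (2 * (C + 1) / σa ^ 2) < 1 / 2 := by
    have hcont : Continuous fun σm : ℝ => σm ^ 2 * (2 * (C + 1) / σa ^ 2) := by fun_prop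
    exact (hcont.tendsto 0).mono_left nhdsWithin_le_nhds |>.eventually_lt_const (by simp)
  refine ⟨exp ((C + 1) ^ 2 / σa ^ 2), ?_⟩
  filter_upwards [hκ, hsmall, self_mem_nhdsWithin] with σm hκ hsmall hσm x
  rw [rho0_zero_eq_exp_weightExponent hσa hσm, ← exp_add, exp_le_exp]
  calc _ ≤ (C + 1) ^ 2 / σa ^ 2 - x ^ 2 / σa ^ 2 :=
        weightExponent_le hσa (by positivity) hκ.le (sq_pos_of_ne_zero hσm) hsmall.le
          (by positivity)
    _ = (C + 1) ^ 2 / σa ^ 2 + -(1 / σa ^ 2) * x ^ 2 := by ring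

theorem tendsto_rho0_zero (hσa : σa ≠ 0) (ν a θ x : ℝ) :
    Tendsto (fun σm => rho0 ν σa σm a θ 0 x) (𝓝[≠] 0) (𝓝 (rhoQuartic σa a θ 0 x)) := by
  have hκ : Tendsto (fun σm : ℝ => a - θ - ν * σm ^ 2) (𝓝[≠] 0) (𝓝 (a - θ)) := by
    have hcont : Continuous fun σm : ℝ => a - θ - ν * σm ^ 2 := by fun_prop
    simpa using (hcont.tendsto 0).mono_left nhdsWithin_le_nhds
  have hlin := (tendsto_log_one_add_mul_div (x ^ 2 / σa ^ 2)).comp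
    (tendsto_sq_nhdsNE_zero.mono_right (nhdsGT_le_nhdsNE 0))
  have hquad := (tendsto_log_one_add_mul_sub_div_sq
    (t := x ^ 2 / σa ^ 2) (by positivity)).comp tendsto_sq_nhdsNE_zero
  have hlimit : rhoQuartic σa a θ 0 x =
      exp ((a - θ) * (x ^ 2 / σa ^ 2) + σa ^ 2 * -((x ^ 2 / σa ^ 2) ^ 2 / 2)) := by
    rw [rhoQuartic]
    congr 1
    field_simp
    ring
  rw [hlimit]
  refine ((continuous_exp.tendsto _).comp
    ((hκ.mul hlin).add (hquad.const_mul (σa ^ 2)))).congr' ?_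
  filter_upwards [self_mem_nhdsWithin] with σm hσm
  exact (rho0_zero_eq_exp_weightExponent hσa hσm ν a θ x).symm

theorem exists_tendstoGaussianTilt_rho0 (hσa : σa ≠ 0) (ν a θ : ℝ) :
    ∃ K, TendstoGaussianTilt (𝓝[≠] 0) (1 / σa ^ 2) K |2 * θ / σa ^ 2|
      (fun σm => rho0 ν σa σm a θ 0) (fun σm => arctanTilt σa σm θ)
      (rhoQuartic σa a θ 0) (fun x => 2 * θ / σa ^ 2 * x) := by
  obtain ⟨K, hK⟩ := exists_eventually_rho0_zero_le hσa ν a θ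
  refine ⟨K, ?_, tendsto_rho0_zero hσa ν a θ, tendsto_arctanTilt σa θ⟩
  filter_upwards [hK, self_mem_nhdsWithin] with σm hle hσm
  exact ⟨continuous_rho0 .., continuous_arctanTilt .., fun x => exp_pos _, hle,
    abs_arctanTilt_le hσm σa θ⟩

end StationaryDensity

theorem stmt5_general (a θ ν μ : ℝ) {σa : ℝ} (hσa : σa ≠ 0) :
    Tendsto (fun σm => deriv (F ν σa σm a θ) μ) (𝓝[≠] 0)
      (𝓝 (deriv (selfConsistency (rhoQuartic σa a θ)) μ)) := by
  obtain ⟨K, hT⟩ := exists_tendstoGaussianTilt_rho0 hσa ν a θ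
  have hT₀ := hT.isGaussianTilt_limit (continuous_rhoQuartic ..) (fun x => exp_pos _)
    (by fun_prop)
  have hF (σm : ℝ) : F ν σa σm a θ =
      selfConsistency (expTilt (rho0 ν σa σm a θ 0) (arctanTilt σa σm θ)) :=
    congrArg selfConsistency (rho0_eq_expTilt ν σa σm a θ)
  simp only [hF]
  rw [rhoQuartic_eq_expTilt]
  exact hT.tendsto_deriv_selfConsistency hT₀ (by positivity) μ

/-- With a = 1, as the multiplicative noise intensity σm tends to 0⁺,
F'_μ(ν,σa,σm,1,θ)[0] converges to the corresponding derivative G'_μ(σa,θ)[0] of the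
Dawson–Shiino self-consistency function. -/
theorem stmt5 (θ σa ν : ℝ) (hθ : 0 < θ) (hσa : 0 < σa) (hν : ν ∈ Set.Icc (0 : ℝ) 1) :
    Tendsto (fun σm : ℝ => Fmu' ν σa σm 1 θ) (nhdsWithin 0 (Set.Ioi 0))
      (nhds (Gmu' σa θ)) := by
  have hlim := stmt5_general 1 θ ν 0 hσa.ne'
  rw [rhoQuartic_one] at hlim
  exact hlim.mono_left (nhdsGT_le_nhdsNE 0)
end

section
/- Fix a = 1, θ = 1 and ν ∈ [0, 1/2). Set σ* = π·Γ(1−ν)/Γ(1/2−ν), where Γ is the Gamma function. Then for every σa > σ* the limit lim_{σm → ∞} F'_μ(ν, σa, σm, 1, 1)[0] exists and is strictly negative, while for every 0 < σa < σ* the limit exists and is strictly positive; in particular, for σa < σ* increasing the multiplicative noise eventually places the system in the stable phase. -/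
open MeasureTheory Real Set Filter

/-!
The density `ρ0[μ]` is `ρ0[0]` tilted by `exp (μ h)`, where `h` is a bounded multiple of the
arctangent, and `ρ0[0]` is even. Hence `F'_μ[0]` is a linear response coefficient: the correlation
of `x` with `h` under `ρ0[0]`, minus `1`. In the variable `y = x / σm` the normalised density is
proportional to `(ε + y²) ^ p * exp (-y²)` with `ε = σa² / σm⁴ → 0` and `p → -ν`, while the
arctangent of `σm² y / σa` tends to `π / 2 * sign y`. Both integrals therefore converge to Gaussian
moments `∫ |y| ^ (n - 2ν) * exp (-y²)`, which are values of `Γ`.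
-/

/-- The critical additive noise strength `σ*` for `θ = 1`; for general `θ` it becomes `θ * σ*`. -/
noncomputable def criticalNoise (ν : ℝ) : ℝ := π * Gamma (1 - ν) / Gamma (1 / 2 - ν)

/-- The exponent of `1 + (σm² / σa²) x²` in the density `ρ0[μ]`. -/
noncomputable def densityExponent (ν σa σm a θ : ℝ) : ℝ :=
  (a - θ - ν * σm ^ 2 + σa ^ 2 / σm ^ 2) / σm ^ 2

/-- The function `h` for which `ρ0[μ] = ρ0[0] * exp (μ * h)`. -/
noncomputable def tilt (σa σm θ x : ℝ) : ℝ := 2 * θ / (σa * σm) * arctan (σm * x / σa)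

/-- The Gaussian weight `|y| ^ (2 * p) * exp (-y ^ 2)`, regularised at the origin by `ε`. Up to a
constant it is the density `ρ0[0]` in the variable `y = x / σm`. -/
noncomputable def gaussWeight (ε p y : ℝ) : ℝ := (ε + y ^ 2) ^ p * exp (-y ^ 2)

lemma abs_arctan_le_pi_div_two (x : ℝ) : |arctan x| ≤ π / 2 :=
  abs_le.2 ⟨(neg_pi_div_two_lt_arctan x).le, (arctan_lt_pi_div_two x).le⟩

lemma tendsto_mul_arctan_mul_atTop (y : ℝ) :
    Tendsto (fun k : ℝ => y * arctan (k * y)) atTop (nhds (π / 2 * |y|)) := by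
  have arctan_pi_div_two : Tendsto arctan atTop (nhds (π / 2)) :=
    tendsto_nhds_of_tendsto_nhdsWithin tendsto_arctan_atTop
  have neg_arctan_pi_div_two : Tendsto arctan atBot (nhds (-(π / 2))) :=
    tendsto_nhds_of_tendsto_nhdsWithin tendsto_arctan_atBot
  rcases lt_trichotomy y 0 with hy | rfl | hy
  · rw [abs_of_neg hy, mul_neg, ← neg_mul, mul_comm _ y]
    exact (neg_arctan_pi_div_two.comp (tendsto_id.atTop_mul_const_of_neg hy)).const_mul y
  · simp
  · rw [abs_of_pos hy, mul_comm _ y]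
    exact (arctan_pi_div_two.comp (tendsto_id.atTop_mul_const hy)).const_mul y

lemma integral_eq_zero_of_odd {f : ℝ → ℝ} (hf : f.Odd) : ∫ x, f x = 0 := by
  have h := integral_neg_eq_self f volume
  simp only [hf _, integral_neg] at h
  linarith

section ExponentialTilt

variable {α : Type*} [MeasurableSpace α] {m : Measure α} {f g h : α → ℝ} {C : ℝ}

lemma exp_mul_le_exp_mul_of_abs_le {r s t : ℝ} (hs : |s| ≤ r) (ht : |t| ≤ C) :
    exp (s * t) ≤ exp (r * C) := by
  refine exp_le_exp.2 ((le_abs_self _).trans ?_)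
  rw [abs_mul]
  exact mul_le_mul hs ht (abs_nonneg t) ((abs_nonneg s).trans hs)

lemma aestronglyMeasurable_exp_const_mul (hh : AEStronglyMeasurable h m) (μ : ℝ) :
    AEStronglyMeasurable (fun x => exp (μ * h x)) m :=
  continuous_exp.comp_aestronglyMeasurable (hh.const_mul μ)

lemma integrable_mul_exp_mul (hg : Integrable g m) (hh : AEStronglyMeasurable h m)
    (hC : ∀ᵐ x ∂m, |h x| ≤ C) (μ : ℝ) : Integrable (fun x => g x * exp (μ * h x)) m := by
  refine hg.mul_bdd (c := exp (|μ| * C)) (aestronglyMeasurable_exp_const_mul hh μ) ?_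
  filter_upwards [hC] with x hx
  rw [norm_eq_abs, abs_exp]
  exact exp_mul_le_exp_mul_of_abs_le le_rfl hx

lemma hasDerivAt_integral_mul_exp_mul (hg : Integrable g m) (hh : AEStronglyMeasurable h m)
    (hC : ∀ᵐ x ∂m, |h x| ≤ C) (μ₀ : ℝ) :
    HasDerivAt (fun μ => ∫ x, g x * exp (μ * h x) ∂m)
      (∫ x, g x * (exp (μ₀ * h x) * h x) ∂m) μ₀ := by
  have deriv_bound : ∀ᵐ x ∂m, ∀ μ ∈ Metric.ball μ₀ 1,
      ‖g x * (exp (μ * h x) * h x)‖ ≤ |g x| * (exp ((|μ₀| + 1) * C) * C) := by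
    filter_upwards [hC] with x hx μ hμ
    have abs_μ_le : |μ| ≤ |μ₀| + 1 := by
      have : |μ - μ₀| < 1 := hμ
      linarith [abs_sub_abs_le_abs_sub μ μ₀]
    rw [norm_mul, norm_mul, norm_eq_abs, norm_eq_abs, norm_eq_abs, abs_exp]
    gcongr ?_ * (?_ * ?_)
    exact exp_mul_le_exp_mul_of_abs_le abs_μ_le hx
  have pointwise_deriv (x : α) (μ : ℝ) :
      HasDerivAt (fun μ => g x * exp (μ * h x)) (g x * (exp (μ * h x) * h x)) μ := by
    simpa using ((hasDerivAt_mul_const (h x)).exp.const_mul (g x))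
  exact (hasDerivAt_integral_of_dominated_loc_of_deriv_le (Metric.ball_mem_nhds μ₀ one_pos)
    (Eventually.of_forall fun μ => (integrable_mul_exp_mul hg hh hC μ).aestronglyMeasurable)
    (integrable_mul_exp_mul hg hh hC μ₀)
    (hg.aestronglyMeasurable.mul ((aestronglyMeasurable_exp_const_mul hh μ₀).mul hh))
    deriv_bound (hg.abs.mul_const _)
    (ae_of_all _ fun x μ _ => pointwise_deriv x μ)).2

lemma hasDerivAt_tilted_mean_sub (hg : Integrable g m) (hfg : Integrable (fun x => f x * g x) m)
    (hh : AEStronglyMeasurable h m) (hC : ∀ᵐ x ∂m, |h x| ≤ C) (g_ne : ∫ x, g x ∂m ≠ 0)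
    (centred : ∫ x, f x * g x ∂m = 0) :
    HasDerivAt
      (fun μ => (∫ x, (f x - μ) * (g x * exp (μ * h x)) ∂m) / ∫ x, g x * exp (μ * h x) ∂m)
      ((∫ x, f x * g x * h x ∂m) / (∫ x, g x ∂m) - 1) 0 := by
  have split_numerator (μ : ℝ) : ∫ x, (f x - μ) * (g x * exp (μ * h x)) ∂m =
      (∫ x, f x * g x * exp (μ * h x) ∂m) - μ * ∫ x, g x * exp (μ * h x) ∂m := by
    rw [← integral_const_mul, ← integral_sub (integrable_mul_exp_mul hfg hh hC μ)
      ((integrable_mul_exp_mul hg hh hC μ).const_mul μ)]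
    congr 1 with x
    ring
  have deriv_den := hasDerivAt_integral_mul_exp_mul hg hh hC 0
  have deriv_num := (hasDerivAt_integral_mul_exp_mul hfg hh hC 0).sub
    ((hasDerivAt_id 0).mul deriv_den)
  simp only [split_numerator]
  refine (deriv_num.div deriv_den (by simpa using g_ne)).congr_deriv ?_
  simp only [Pi.sub_apply, Pi.mul_apply, id, zero_mul, exp_zero, one_mul, mul_one, centred,
    add_zero, sub_zero]
  field_simp

end ExponentialTilt

section GaussWeight

variable {ε p q r y : ℝ} {n : ℕ}

lemma gaussWeight_nonneg (hε : 0 ≤ ε) : 0 ≤ gaussWeight ε p y := by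
  unfold gaussWeight
  positivity

lemma measurable_gaussWeight (ε p : ℝ) : Measurable (gaussWeight ε p) := by
  unfold gaussWeight
  fun_prop

lemma integral_abs_pow_mul_gaussWeight_zero (hp : -(n + 1) / 2 < p) :
    ∫ y, |y| ^ n * gaussWeight 0 p y = Gamma (p + (n + 1) / 2) := by
  have even_form (y : ℝ) : |y| ^ n * gaussWeight 0 p y = |y| ^ n * gaussWeight 0 p |y| := by
    simp only [gaussWeight, sq_abs]
  have rpow_form : ∀ y ∈ Ioi (0 : ℝ),
      y ^ n * gaussWeight 0 p y = y ^ (n + 2 * p) * exp (-y ^ (2 : ℝ)) := by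
    intro y hy
    rw [gaussWeight, zero_add, rpow_add hy, rpow_natCast, rpow_mul hy.le, rpow_two, mul_assoc]
  simp only [even_form]
  rw [integral_comp_abs (f := fun y => y ^ n * gaussWeight 0 p y),
    setIntegral_congr_fun measurableSet_Ioi rpow_form,
    integral_rpow_mul_exp_neg_rpow two_pos (by linarith), ← mul_assoc,
    mul_one_div_cancel two_ne_zero, one_mul]
  congr 1
  ring

lemma integrable_abs_pow_mul_gaussWeight_zero (hp : -(n + 1) / 2 < p) :
    Integrable fun y => |y| ^ n * gaussWeight 0 p y := by
  refine .of_integral_ne_zero ?_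
  rw [integral_abs_pow_mul_gaussWeight_zero hp]
  exact (Gamma_pos_of_pos (by linarith)).ne'

lemma exists_one_add_mul_sq_rpow_le_mul_exp {k b : ℝ} (hk : 0 ≤ k) (hb : 0 < b) (p : ℝ) :
    ∃ C, ∀ x : ℝ, (1 + k * x ^ 2) ^ p ≤ C * exp (b * x ^ 2) := by
  set δ := b / (1 + k) with hδ_def
  have hδ : 0 < δ := by positivity
  refine ⟨(|p| / δ) ^ |p| * exp δ, fun x => ?_⟩
  have one_le_base : 1 ≤ 1 + k * x ^ 2 := by linarith [mul_nonneg hk (sq_nonneg x)]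
  have hδk : δ * (1 + k * x ^ 2) ≤ δ + b * x ^ 2 := by
    have : δ * k ≤ b := by
      rw [hδ_def, div_mul_eq_mul_div, div_le_iff₀ (by positivity)]
      nlinarith
    nlinarith [sq_nonneg x]
  calc (1 + k * x ^ 2) ^ p ≤ (1 + k * x ^ 2) ^ |p| :=
        rpow_le_rpow_of_exponent_le one_le_base (le_abs_self p)
    _ ≤ (|p| / δ) ^ |p| * exp (δ * (1 + k * x ^ 2)) := by
        have := ProbabilityTheory.rpow_abs_le_mul_exp_abs (1 + k * x ^ 2) (abs_nonneg p) hδ.ne'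
        rwa [abs_of_pos hδ, abs_of_pos (one_pos.trans_le one_le_base)] at this
    _ ≤ (|p| / δ) ^ |p| * exp (δ + b * x ^ 2) := by gcongr
    _ = (|p| / δ) ^ |p| * exp δ * exp (b * x ^ 2) := by rw [exp_add, mul_assoc]

lemma integrable_pow_mul_one_add_mul_sq_rpow_mul_exp {k b : ℝ} (hk : 0 ≤ k) (hb : 0 < b) (n : ℕ)
    (p : ℝ) : Integrable fun x : ℝ => x ^ n * ((1 + k * x ^ 2) ^ p * exp (-b * x ^ 2)) := by
  obtain ⟨C, hC⟩ := exists_one_add_mul_sq_rpow_le_mul_exp hk (half_pos hb) p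
  have gaussian_moment : Integrable fun x : ℝ => x ^ n * exp (-(b / 2) * x ^ 2) := by
    simpa only [rpow_natCast] using
      integrable_rpow_mul_exp_neg_mul_sq (half_pos hb) (s := n)
        (by linarith [n.cast_nonneg (α := ℝ)])
  refine (gaussian_moment.norm.const_mul C).mono'
    (by fun_prop : Measurable _).aestronglyMeasurable (ae_of_all _ fun x => ?_)
  have weight_le : (1 + k * x ^ 2) ^ p * exp (-b * x ^ 2) ≤ C * exp (-(b / 2) * x ^ 2) := by
    calc (1 + k * x ^ 2) ^ p * exp (-b * x ^ 2)
        ≤ C * exp (b / 2 * x ^ 2) * exp (-b * x ^ 2) := by gcongr; exact hC x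
      _ = C * exp (-(b / 2) * x ^ 2) := by rw [mul_assoc, ← exp_add]; ring_nf
  have weight_nonneg : 0 ≤ (1 + k * x ^ 2) ^ p * exp (-b * x ^ 2) := by positivity
  rw [norm_mul (x ^ n), norm_mul (x ^ n), norm_of_nonneg weight_nonneg,
    norm_of_nonneg (exp_pos _).le, mul_left_comm C]
  gcongr

lemma integrable_abs_pow_mul_gaussWeight_one (n : ℕ) (p : ℝ) :
    Integrable fun y => |y| ^ n * gaussWeight 1 p y := by
  have h := (integrable_pow_mul_one_add_mul_sq_rpow_mul_exp zero_le_one one_pos n p).norm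
  refine h.congr (ae_of_all _ fun y => ?_)
  dsimp only
  rw [norm_mul, norm_pow, norm_eq_abs, norm_of_nonneg (by positivity), gaussWeight, one_mul,
    neg_one_mul]

/-- The exponent `q` controls the singularity at the origin, `r` the growth at infinity. -/
lemma gaussWeight_le_add (hε : 0 ≤ ε) (hε_one : ε ≤ 1) (hq : q ≤ 0) (hr : 0 ≤ r) (hqp : q ≤ p)
    (hpr : p ≤ r) (hy : y ≠ 0) :
    gaussWeight ε p y ≤ gaussWeight 0 q y + gaussWeight 1 r y := by
  have hy_sq : 0 < y ^ 2 := by positivity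
  have base_pos : 0 < ε + y ^ 2 := by positivity
  simp only [gaussWeight, ← add_mul, zero_add]
  gcongr
  rcases le_total (ε + y ^ 2) 1 with base_le_one | one_le_base
  · calc (ε + y ^ 2) ^ p ≤ (ε + y ^ 2) ^ q := rpow_le_rpow_of_exponent_ge base_pos base_le_one hqp
      _ ≤ (y ^ 2) ^ q := rpow_le_rpow_of_nonpos hy_sq (by linarith) hq
      _ ≤ (y ^ 2) ^ q + (1 + y ^ 2) ^ r := le_add_of_nonneg_right (by positivity)
  · calc (ε + y ^ 2) ^ p ≤ (ε + y ^ 2) ^ r := rpow_le_rpow_of_exponent_le one_le_base hpr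
      _ ≤ (1 + y ^ 2) ^ r := by gcongr
      _ ≤ (y ^ 2) ^ q + (1 + y ^ 2) ^ r := le_add_of_nonneg_left (by positivity)

lemma tendsto_integral_mul_gaussWeight {ι : Type*} {l : Filter ι} [l.IsCountablyGenerated]
    {ε p : ι → ℝ} {p₀ C : ℝ} {φ : ι → ℝ → ℝ} {φ₀ : ℝ → ℝ}
    (hε : Tendsto ε l (nhds 0)) (hε_nonneg : ∀ i, 0 ≤ ε i) (hp : Tendsto p l (nhds p₀))
    (hp₀ : -(n + 1) / 2 < p₀) (hφ_meas : ∀ i, Measurable (φ i))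
    (hφ_le : ∀ i y, |φ i y| ≤ C * |y| ^ n) (hφ : ∀ y, Tendsto (φ · y) l (nhds (φ₀ y))) :
    Tendsto (fun i => ∫ y, φ i y * gaussWeight (ε i) (p i) y) l
      (nhds (∫ y, φ₀ y * gaussWeight 0 p₀ y)) := by
  obtain ⟨q, q_gt, q_lt⟩ : ∃ q, -((n : ℝ) + 1) / 2 < q ∧ q < min p₀ 0 :=
    exists_between (lt_min hp₀ (by linarith [n.cast_nonneg (α := ℝ)]))
  obtain ⟨r, r_gt⟩ := exists_gt (max p₀ 0)
  rw [lt_min_iff] at q_lt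
  rw [max_lt_iff] at r_gt
  have integrable_bound : Integrable fun y =>
      C * (|y| ^ n * gaussWeight 0 q y + |y| ^ n * gaussWeight 1 r y) :=
    ((integrable_abs_pow_mul_gaussWeight_zero q_gt).add
      (integrable_abs_pow_mul_gaussWeight_one n r)).const_mul C
  refine tendsto_integral_filter_of_dominated_convergence _ (.of_forall fun i =>
    ((hφ_meas i).mul (measurable_gaussWeight _ _)).aestronglyMeasurable) ?_ integrable_bound ?_
  · filter_upwards [hε.eventually_le_const one_pos, hp.eventually_const_le q_lt.1,
      hp.eventually_le_const r_gt.1] with i hε_one hqp hpr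
    filter_upwards [volume.ae_ne 0] with y hy
    have weight_nonneg : 0 ≤ gaussWeight (ε i) (p i) y := gaussWeight_nonneg (hε_nonneg i)
    rw [norm_mul, norm_eq_abs, norm_of_nonneg weight_nonneg, ← mul_add, ← mul_assoc]
    exact mul_le_mul (hφ_le i y)
      (gaussWeight_le_add (hε_nonneg i) hε_one q_lt.2.le r_gt.2.le hqp hpr hy) weight_nonneg
      ((abs_nonneg _).trans (hφ_le i y))
  · filter_upwards [volume.ae_ne 0] with y hy
    have base_ne : 0 + y ^ 2 ≠ 0 := by positivity
    exact (hφ y).mul (((hε.add_const (y ^ 2)).rpow hp (.inl base_ne)).mul_const _)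

lemma tendsto_integral_gaussWeight {ι : Type*} {l : Filter ι} [l.IsCountablyGenerated]
    {ε p : ι → ℝ} {p₀ : ℝ} (hε : Tendsto ε l (nhds 0)) (hε_nonneg : ∀ i, 0 ≤ ε i)
    (hp : Tendsto p l (nhds p₀)) (hp₀ : -1 / 2 < p₀) :
    Tendsto (fun i => ∫ y, gaussWeight (ε i) (p i) y) l (nhds (Gamma (p₀ + 1 / 2))) := by
  have h := tendsto_integral_mul_gaussWeight (n := 0) (C := 1) (φ := fun _ _ => 1) hε hε_nonneg hp
    (by simpa using hp₀) (fun _ => measurable_const) (by simp) (fun _ => tendsto_const_nhds)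
  have moment := integral_abs_pow_mul_gaussWeight_zero (n := 0) (p := p₀) (by simpa using hp₀)
  simp only [pow_zero, one_mul, Nat.cast_zero, zero_add] at h moment
  rwa [moment] at h

lemma tendsto_integral_mul_arctan_mul_gaussWeight {ι : Type*} {l : Filter ι}
    [l.IsCountablyGenerated] {ε p k : ι → ℝ} {p₀ : ℝ} (hε : Tendsto ε l (nhds 0))
    (hε_nonneg : ∀ i, 0 ≤ ε i) (hp : Tendsto p l (nhds p₀)) (hp₀ : -1 < p₀)
    (hk : Tendsto k l atTop) :
    Tendsto (fun i => ∫ y, y * arctan (k i * y) * gaussWeight (ε i) (p i) y) l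
      (nhds (π / 2 * Gamma (p₀ + 1))) := by
  have hp₁ : -(((1 : ℕ) : ℝ) + 1) / 2 < p₀ := by norm_num; exact hp₀
  have abs_mul_arctan_le (i : ι) (y : ℝ) : |y * arctan (k i * y)| ≤ π / 2 * |y| ^ 1 := by
    rw [abs_mul, mul_comm, pow_one]
    gcongr
    exact abs_arctan_le_pi_div_two _
  have h := tendsto_integral_mul_gaussWeight hε hε_nonneg hp hp₁
    (fun i => measurable_id.mul (measurable_arctan.comp (measurable_id.const_mul (k i))))
    abs_mul_arctan_le (fun y => (tendsto_mul_arctan_mul_atTop y).comp hk)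
  have moment := integral_abs_pow_mul_gaussWeight_zero hp₁
  norm_num at moment
  simp only [mul_assoc (π / 2), integral_const_mul, moment] at h
  exact h

end GaussWeight

section Density

variable {ν σa σm a θ : ℝ}

lemma rho0_eq_mul_exp_tilt (ν σa σm a θ μ x : ℝ) :
    rho0 ν σa σm a θ μ x = rho0 ν σa σm a θ 0 x * exp (μ * tilt σa σm θ x) := by
  rw [rho0, rho0, tilt, ← exp_add]
  congr 1
  ring

lemma abs_tilt_le (σa σm θ x : ℝ) : |tilt σa σm θ x| ≤ |2 * θ / (σa * σm)| * (π / 2) := by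
  rw [tilt, abs_mul]
  gcongr
  exact abs_arctan_le_pi_div_two _

lemma measurable_tilt (σa σm θ : ℝ) : Measurable (tilt σa σm θ) := by
  unfold tilt
  fun_prop

lemma rho0_zero_eq_rpow_mul_exp (ν σa σm a θ x : ℝ) :
    rho0 ν σa σm a θ 0 x =
      (1 + σm ^ 2 / σa ^ 2 * x ^ 2) ^ densityExponent ν σa σm a θ * exp (-x ^ 2 / σm ^ 2) := by
  rw [rho0, densityExponent, rpow_def_of_pos (by positivity), ← exp_add]
  ring_nf

lemma even_rho0_zero (ν σa σm a θ : ℝ) : (rho0 ν σa σm a θ 0).Even := by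
  intro x
  simp only [rho0_zero_eq_rpow_mul_exp, neg_sq]

lemma integrable_pow_mul_rho0_zero (hσm : σm ≠ 0) (n : ℕ) :
    Integrable fun x => x ^ n * rho0 ν σa σm a θ 0 x := by
  have h := integrable_pow_mul_one_add_mul_sq_rpow_mul_exp (k := σm ^ 2 / σa ^ 2)
    (b := 1 / σm ^ 2) (by positivity) (by positivity) n (densityExponent ν σa σm a θ)
  refine h.congr (ae_of_all _ fun x => ?_)
  have gaussian_eq : -(1 / σm ^ 2) * x ^ 2 = -x ^ 2 / σm ^ 2 := by ring
  simp only [rho0_zero_eq_rpow_mul_exp, gaussian_eq]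

lemma Fmu'_eq_integral_tilt (hσm : σm ≠ 0) :
    Fmu' ν σa σm a θ = (∫ x, x * rho0 ν σa σm a θ 0 x * tilt σa σm θ x) /
      (∫ x, rho0 ν σa σm a θ 0 x) - 1 := by
  have integrable_rho0 : Integrable (rho0 ν σa σm a θ 0) := by
    simpa using integrable_pow_mul_rho0_zero hσm 0
  have integrable_mul_rho0 : Integrable fun x => x * rho0 ν σa σm a θ 0 x := by
    simpa using integrable_pow_mul_rho0_zero hσm 1
  have centred : ∫ x, x * rho0 ν σa σm a θ 0 x = 0 :=
    integral_eq_zero_of_odd fun x => by rw [even_rho0_zero, neg_mul]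
  have h := hasDerivAt_tilted_mean_sub integrable_rho0 integrable_mul_rho0
    (measurable_tilt σa σm θ).aestronglyMeasurable (ae_of_all _ (abs_tilt_le σa σm θ))
    (integral_exp_pos integrable_rho0).ne' centred
  simp only [← rho0_eq_mul_exp_tilt] at h
  exact h.deriv

lemma rho0_zero_mul_eq_gaussWeight (hσa : 0 < σa) (hσm : 0 < σm) (y : ℝ) :
    rho0 ν σa σm a θ 0 (σm * y) =
      (σa ^ 2 / σm ^ 4) ^ (-densityExponent ν σa σm a θ) *
        gaussWeight (σa ^ 2 / σm ^ 4) (densityExponent ν σa σm a θ) y := by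
  have base_eq : 1 + σm ^ 2 / σa ^ 2 * (σm * y) ^ 2 =
      (σa ^ 2 / σm ^ 4)⁻¹ * (σa ^ 2 / σm ^ 4 + y ^ 2) := by field_simp
  have gaussian_eq : -(σm * y) ^ 2 / σm ^ 2 = -y ^ 2 := by field_simp
  rw [rho0_zero_eq_rpow_mul_exp, base_eq, gaussian_eq, mul_rpow (by positivity) (by positivity),
    inv_rpow (by positivity), ← rpow_neg (by positivity), gaussWeight, mul_assoc]

lemma Fmu'_eq_integral_gaussWeight (hσa : 0 < σa) (hσm : 0 < σm) :
    Fmu' ν σa σm a θ = 2 * θ / σa *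
      ((∫ y, y * arctan (σm ^ 2 / σa * y) *
          gaussWeight (σa ^ 2 / σm ^ 4) (densityExponent ν σa σm a θ) y) /
        ∫ y, gaussWeight (σa ^ 2 / σm ^ 4) (densityExponent ν σa σm a θ) y) - 1 := by
  set p := densityExponent ν σa σm a θ
  set c := (σa ^ 2 / σm ^ 4) ^ (-p)
  have hc : 0 < c := by positivity
  have integral_rescale (φ : ℝ → ℝ) : ∫ x, φ x = σm * ∫ y, φ (σm * y) := by
    rw [Measure.integral_comp_mul_left, abs_of_pos (inv_pos.2 hσm), smul_eq_mul,
      mul_inv_cancel_left₀ hσm.ne']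
  have rescaled_density (y : ℝ) :
      rho0 ν σa σm a θ 0 (σm * y) = c * gaussWeight (σa ^ 2 / σm ^ 4) p y :=
    rho0_zero_mul_eq_gaussWeight hσa hσm y
  have normalisation : ∫ x, rho0 ν σa σm a θ 0 x =
      σm * c * ∫ y, gaussWeight (σa ^ 2 / σm ^ 4) p y := by
    rw [integral_rescale]
    simp only [rescaled_density, integral_const_mul, mul_assoc]
  have correlation : ∫ x, x * rho0 ν σa σm a θ 0 x * tilt σa σm θ x =
      σm * c * (2 * θ / σa *
        ∫ y, y * arctan (σm ^ 2 / σa * y) * gaussWeight (σa ^ 2 / σm ^ 4) p y) := by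
    rw [integral_rescale, mul_assoc σm, ← mul_assoc c, ← integral_const_mul (c * (2 * θ / σa))]
    congr 2 with y
    have arg_eq : σm * (σm * y) / σa = σm ^ 2 / σa * y := by ring
    rw [rescaled_density, tilt, arg_eq]
    field_simp
  rw [Fmu'_eq_integral_tilt hσm.ne', normalisation, correlation,
    mul_div_mul_left _ _ (by positivity), mul_div_assoc]

end Density

section StrongMultiplicativeNoise

variable {ν σa θ : ℝ}

lemma tendsto_densityExponent_atTop (ν σa a θ : ℝ) :
    Tendsto (fun σm => densityExponent ν σa σm a θ) atTop (nhds (-ν)) := by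
  have inv_sq : Tendsto (fun σm : ℝ => (σm ^ 2)⁻¹) atTop (nhds 0) :=
    (tendsto_pow_atTop two_ne_zero).inv_tendsto_atTop
  have expansion : Tendsto
      (fun σm : ℝ => (a - θ) * (σm ^ 2)⁻¹ - ν + σa ^ 2 * ((σm ^ 2)⁻¹ * (σm ^ 2)⁻¹)) atTop
      (nhds ((a - θ) * 0 - ν + σa ^ 2 * (0 * 0))) :=
    ((inv_sq.const_mul _).sub_const ν).add ((inv_sq.mul inv_sq).const_mul _)
  simp only [mul_zero, zero_sub, add_zero] at expansion
  refine expansion.congr' ?_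
  filter_upwards [eventually_ne_atTop 0] with σm hσm
  rw [densityExponent]
  field_simp

lemma tendsto_Fmu'_atTop (a θ : ℝ) (hν : ν < 1 / 2) (hσa : 0 < σa) :
    Tendsto (fun σm => Fmu' ν σa σm a θ) atTop (nhds (θ * criticalNoise ν / σa - 1)) := by
  have hε : Tendsto (fun σm : ℝ => σa ^ 2 / σm ^ 4) atTop (nhds 0) :=
    tendsto_const_nhds.div_atTop (tendsto_pow_atTop four_ne_zero)
  have hε_nonneg (σm : ℝ) : 0 ≤ σa ^ 2 / σm ^ 4 := by positivity
  have hp := tendsto_densityExponent_atTop ν σa a θ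
  have hk : Tendsto (fun σm : ℝ => σm ^ 2 / σa) atTop atTop :=
    (tendsto_pow_atTop two_ne_zero).atTop_div_const hσa
  have correlation := tendsto_integral_mul_arctan_mul_gaussWeight hε hε_nonneg hp (by linarith) hk
  have normalisation := tendsto_integral_gaussWeight hε hε_nonneg hp (by linarith)
  have Gamma_ne : Gamma (-ν + 1 / 2) ≠ 0 := (Gamma_pos_of_pos (by linarith)).ne'
  have limit_eq : 2 * θ / σa * (π / 2 * Gamma (-ν + 1) / Gamma (-ν + 1 / 2)) - 1 =
      θ * criticalNoise ν / σa - 1 := by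
    rw [criticalNoise, neg_add_eq_sub, neg_add_eq_sub]
    ring
  rw [← limit_eq]
  refine (((correlation.div normalisation Gamma_ne).const_mul _).sub_const 1).congr' ?_
  filter_upwards [eventually_gt_atTop 0] with σm hσm
  exact (Fmu'_eq_integral_gaussWeight hσa hσm).symm

lemma criticalNoise_pos (hν : ν < 1 / 2) : 0 < criticalNoise ν :=
  div_pos (mul_pos pi_pos (Gamma_pos_of_pos (by linarith))) (Gamma_pos_of_pos (by linarith))

theorem stmt8_general (a : ℝ) (hθ : 0 < θ) (hν : ν < 1 / 2) :
    (∀ σa : ℝ, θ * criticalNoise ν < σa →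
      ∃ L : ℝ, L < 0 ∧ Tendsto (fun σm => Fmu' ν σa σm a θ) atTop (nhds L)) ∧
    (∀ σa : ℝ, 0 < σa → σa < θ * criticalNoise ν →
      ∃ L : ℝ, 0 < L ∧ Tendsto (fun σm => Fmu' ν σa σm a θ) atTop (nhds L) ∧
        ∀ᶠ σm in atTop, 0 < Fmu' ν σa σm a θ) := by
  constructor
  · intro σa h
    have hσa : 0 < σa := (mul_pos hθ (criticalNoise_pos hν)).trans h
    exact ⟨_, sub_neg.2 ((div_lt_one hσa).2 h), tendsto_Fmu'_atTop a θ hν hσa⟩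
  · intro σa hσa h
    have limit_pos := sub_pos.2 ((one_lt_div hσa).2 h)
    have limit := tendsto_Fmu'_atTop a θ hν hσa
    exact ⟨_, limit_pos, limit, limit.eventually_const_lt limit_pos⟩

end StrongMultiplicativeNoise

/-- With a = θ = 1 and ν ∈ [0, 1/2), setting σ* = π·Γ(1−ν)/Γ(1/2−ν): for
σa > σ* the limit of F'_μ[0] as σm → ∞ exists and is negative, while for 0 < σa < σ* it exists
and is positive; in particular for σa < σ* large multiplicative noise places the system in the
stable phase. -/
theorem stmt8 (ν : ℝ) (hν : ν ∈ Set.Ico (0 : ℝ) (1 / 2)) :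
    (∀ σa : ℝ, π * Real.Gamma (1 - ν) / Real.Gamma (1 / 2 - ν) < σa →
      ∃ L : ℝ, L < 0 ∧ Tendsto (fun σm : ℝ => Fmu' ν σa σm 1 1) atTop (nhds L)) ∧
    (∀ σa : ℝ, 0 < σa → σa < π * Real.Gamma (1 - ν) / Real.Gamma (1 / 2 - ν) →
      ∃ L : ℝ, 0 < L ∧ Tendsto (fun σm : ℝ => Fmu' ν σa σm 1 1) atTop (nhds L) ∧
        ∀ᶠ σm : ℝ in atTop, 0 < Fmu' ν σa σm 1 1) := by
  simpa only [one_mul, criticalNoise] using stmt8_general 1 one_pos hν.2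
end
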